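/- Assume C is an n×n nonnegative irreducible matrix with C₁₁ > 0, and let εₙ ∈ (0,1). Then for every ε with 0 < ε < εₙ there exists δ > 0, depending only on C, ε and εₙ, such that for every admissible weight function g satisfying both g(εₙ)^{n−1} ≤ g(1−εₙ) and L⁻(g) ≥ δ, the map u_g has a fixed point in Σ_ε = {x ∈ Σ : x₁ ≥ 1 − ε}. -/

import Mathlib

open Set Matrix

/-- An admissible weight function. -/
def IsAdmissible (g g' : ℝ → ℝ) : Prop :=
  (∀ x ∈ Set.Icc (0:ℝ) 1, HasDerivWithinAt g (g' x) (Set.Icc (0:ℝ) 1) x) ∧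
  ContinuousOn g' (Set.Icc (0:ℝ) 1) ∧
  g 0 = 1 ∧
  (∀ x ∈ Set.Icc (0:ℝ) 1, 0 < g x) ∧
  (∀ x ∈ Set.Icc (0:ℝ) 1, 0 < g' x)

/-- The set of values `g'(x)/g(x)` for `x ∈ [0,1]`; its minimum is `L⁻(g)`. -/
def ratioSet (g g' : ℝ → ℝ) : Set ℝ := (fun x => g' x / g x) '' Set.Icc (0:ℝ) 1

/-- `C` is irreducible. -/
def IsIrred {n : ℕ} (C : Matrix (Fin n) (Fin n) ℝ) : Prop :=
  ∀ i j : Fin n, ∃ m : ℕ, 0 < m ∧ 0 < (C ^ m) i j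

/-- The stochastic matrix `M_g(x)`. -/
noncomputable def Mg {n : ℕ} (C : Matrix (Fin n) (Fin n) ℝ) (g : ℝ → ℝ)
    (x : Fin n → ℝ) : Matrix (Fin n) (Fin n) ℝ :=
  Matrix.of fun i j => C i j * g (x j) / ∑ k, C i k * g (x k)

/-!
If `x` lies in `Σ_ε`, the weight at the distinguished vertex is at least `g (1 - ε)` and all other
weights are at most `g ε`. Since `C₁₁ > 0`, the chain leaves the distinguished vertex with
probability of order `g ε / g (1 - ε)`, and following paths back to it shows that the invariant
measure puts mass at most a constant times `g ε ^ (n - 1) / g (1 - ε)` elsewhere. The growth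
condition gives `g ε ^ (n - 1) ≤ g (1 - εₙ)`, and `g (1 - εₙ) / g (1 - ε)` is small when `L⁻(g)` is
large. So `u_g` maps `Σ_ε` into itself and Brouwer's theorem applies.

Brouwer's theorem is proved by the Milnor–Rogers argument: a `C¹` map of a ball onto its bounding
sphere that fixes the sphere would have vanishing Jacobian, yet the integral of the Jacobian of
`(1 - t) • id + t • f` is a polynomial in `t` that is equal to the volume for small `t`, when this
map is a bijection of the ball.
-/

open Metric MeasureTheory Topology NNReal

section VolumeOfSelfMaps

lemma exists_mem_frontier_of_isPreconnected {X : Type*} [TopologicalSpace X] {s K : Set X}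
    (hs : IsPreconnected s) {x y : X} (hx : x ∈ s) (hxK : x ∈ K) (hy : y ∈ s) (hyK : y ∉ K) :
    ∃ z ∈ s, z ∈ frontier K := by
  by_contra! h
  have hcover : s ⊆ interior K ∪ (closure K)ᶜ := fun z hz =>
    or_iff_not_imp_right.2 fun hzK => by_contra fun hint => h z hz ⟨not_not.1 hzK, hint⟩
  have hsub : s ⊆ interior K := hs.subset_left_of_subset_union isOpen_interior
    isClosed_closure.isOpen_compl
    (disjoint_compl_right.mono_left (interior_subset.trans subset_closure)) hcover
    ⟨x, hx, (hcover hx).resolve_right (not_not.2 (subset_closure hxK))⟩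
  exact hyK (interior_subset (hsub hy))

lemma lipschitzWith_indicator {E F : Type*} [NormedAddCommGroup E] [NormedSpace ℝ E]
    [NormedAddCommGroup F] {K : Set E} (hK : IsClosed K) {h : E → F} {c : ℝ≥0}
    (hlip : LipschitzOnWith c h K) (hfr : ∀ x ∈ frontier K, h x = 0) :
    LipschitzWith c (K.indicator h) := by
  have hcross : ∀ x ∈ K, ∀ y ∉ K, ‖h x‖ ≤ c * dist x y := by
    intro x hx y hy
    obtain ⟨z, hz, hzK⟩ := exists_mem_frontier_of_isPreconnected
      (convex_segment x y).isPreconnected (left_mem_segment ℝ x y) hx (right_mem_segment ℝ x y) hy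
    calc ‖h x‖ = dist (h x) (h z) := by rw [hfr z hzK, dist_zero_right]
      _ ≤ c * dist x z := hlip.dist_le_mul x hx z (hK.frontier_subset hzK)
      _ ≤ c * dist x y := by
        gcongr
        linarith [dist_add_dist_of_mem_segment hz, dist_nonneg (x := z) (y := y)]
  refine LipschitzWith.of_dist_le_mul fun x y => ?_
  by_cases hx : x ∈ K <;> by_cases hy : y ∈ K
  · simpa [hx, hy] using hlip.dist_le_mul x hx y hy
  · simpa [hx, hy] using hcross x hx y hy
  · simpa [hx, hy, dist_comm] using hcross y hy x hx
  · simpa [hx, hy] using mul_nonneg c.coe_nonneg dist_nonneg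

/-- Extending `h` by zero turns `id + h` into a Lipschitz perturbation of the identity of the whole
space, hence a bijection, and it is the identity outside `K`. -/
lemma bijOn_id_add_of_lipschitzOnWith {E : Type*} [NormedAddCommGroup E] [NormedSpace ℝ E]
    [CompleteSpace E] {K : Set E} (hK : IsClosed K) {h : E → E} {c : ℝ≥0} (hc : c < 1)
    (hlip : LipschitzOnWith c h K) (hfr : ∀ x ∈ frontier K, h x = 0)
    (hmaps : MapsTo (fun x => x + h x) K K) : BijOn (fun x => x + h x) K K := by
  let ψ : E → E := fun x => x + K.indicator h x
  have hψ : ApproximatesLinearOn ψ (ContinuousLinearEquiv.refl ℝ E : E →L[ℝ] E) univ c := by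
    intro x _ y _
    calc ‖ψ x - ψ y - (x - y)‖ = ‖K.indicator h x - K.indicator h y‖ := by
          congr 1
          simp only [ψ]
          abel
      _ ≤ c * ‖x - y‖ := (lipschitzWith_indicator hK hlip hfr).norm_sub_le x y
  have hsmall : Subsingleton E ∨
      c < ‖((ContinuousLinearEquiv.refl ℝ E).symm : E →L[ℝ] E)‖₊⁻¹ := by
    rcases subsingleton_or_nontrivial E with hE | hE
    · exact .inl hE
    · exact .inr (by simpa [ContinuousLinearMap.nnnorm_id] using hc)
  have heq : EqOn ψ (fun x => x + h x) K := fun x hx => by simp [ψ, hx]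
  refine ⟨hmaps, heq.injOn_iff.1 ((hψ.injOn hsmall).mono (subset_univ K)), fun y hy => ?_⟩
  obtain ⟨x, rfl⟩ := hψ.surjective hsmall y
  have hx : x ∈ K := by
    by_contra hx
    simp [ψ, hx] at hy
  exact ⟨x, hx, (heq hx).symm⟩

lemma det_one_add_pos_of_norm_lt_one {E : Type*} [NormedAddCommGroup E] [NormedSpace ℝ E]
    [FiniteDimensional ℝ E] {A : E →L[ℝ] E} (hA : ‖A‖ < 1) : 0 < (1 + A).det := by
  have hcont : Continuous fun s : ℝ => (1 + s • A).det :=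
    ContinuousLinearMap.continuous_det.comp (by fun_prop)
  have hne : ∀ s ∈ Icc (0 : ℝ) 1, (1 + s • A).det ≠ 0 := by
    intro s hs
    have hnorm : ‖-(s • A)‖ < 1 := by
      rw [norm_neg, norm_smul, Real.norm_of_nonneg hs.1]
      exact (mul_le_of_le_one_left (norm_nonneg A) hs.2).trans_lt hA
    have hunit : IsUnit (1 + s • A) := by
      simpa using isUnit_one_sub_of_norm_lt_one hnorm
    exact (LinearMap.isUnit_det _ (hunit.map ContinuousLinearMap.toLinearMapRingHom)).ne_zero
  by_contra! hneg
  obtain ⟨s, hs, hs0⟩ := intermediate_value_Icc' zero_le_one hcont.continuousOn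
    (show (0 : ℝ) ∈ Icc (1 + (1 : ℝ) • A).det (1 + (0 : ℝ) • A).det by
      simpa [ContinuousLinearMap.det] using hneg)
  exact hne s hs hs0

lemma exists_polynomial_eval_eq_det_one_add_smul {R M : Type*} [CommRing R] [Nontrivial R]
    [AddCommGroup M] [Module R M] [Module.Free R M] [Module.Finite R M] (A : M →ₗ[R] M) :
    ∃ P : Polynomial R, P.natDegree ≤ Module.finrank R M ∧
      ∀ t, P.eval t = LinearMap.det (1 + t • A) := by
  let b := Module.finBasis R M
  let N := LinearMap.toMatrix b b A
  refine ⟨((Polynomial.X : Polynomial R) • N.map Polynomial.C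
    + (1 : Matrix _ _ R).map Polynomial.C).det, ?_, fun t => ?_⟩
  · simpa using Polynomial.natDegree_det_X_add_C_le N 1
  · rw [← LinearMap.det_toMatrix b, ← Polynomial.coe_evalRingHom, RingHom.map_det]
    congr 1
    ext i j
    by_cases hij : i = j <;> simp [N, hij, LinearMap.toMatrix_one] <;> ring

/-- Lagrange interpolation at `d + 1` fixed nodes turns the integral of a family of polynomials
into a finite combination of integrals of evaluations. -/
lemma exists_polynomial_eval_eq_integral {X : Type*} [MeasurableSpace X] {μ : Measure X}
    {P : X → Polynomial ℝ} {d : ℕ} (hdeg : ∀ x, (P x).natDegree ≤ d)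
    (hint : ∀ t, Integrable (fun x => (P x).eval t) μ) :
    ∃ Q : Polynomial ℝ, ∀ t, Q.eval t = ∫ x, (P x).eval t ∂μ := by
  let v : Fin (d + 1) → ℝ := fun i => i
  have hv : Set.InjOn v (Finset.univ : Finset (Fin (d + 1))) := fun i _ j _ hij =>
    Fin.ext (Nat.cast_injective hij)
  have hP : ∀ x t, (P x).eval t =
      ∑ i, (P x).eval (v i) * (Lagrange.basis Finset.univ v i).eval t := by
    intro x t
    have hlt : (P x).degree < (Finset.univ : Finset (Fin (d + 1))).card := by
      refine Polynomial.degree_le_natDegree.trans_lt ?_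
      rw [Finset.card_univ, Fintype.card_fin]
      exact_mod_cast Nat.lt_succ_of_le (hdeg x)
    conv_lhs => rw [Lagrange.eq_interpolate hv hlt]
    simp [Lagrange.interpolate_apply, Polynomial.eval_finsetSum]
  refine ⟨Lagrange.interpolate Finset.univ v fun i => ∫ x, (P x).eval (v i) ∂μ, fun t => ?_⟩
  simp_rw [hP _ t]
  rw [integral_finsetSum _ fun i _ => (hint (v i)).mul_const _]
  simp [Lagrange.interpolate_apply, Polynomial.eval_finsetSum, integral_mul_const]

variable {E : Type*} [NormedAddCommGroup E] [NormedSpace ℝ E] [FiniteDimensional ℝ E]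
  [MeasurableSpace E] [BorelSpace E] (μ : Measure E) [μ.IsAddHaarMeasure] {K : Set E}

lemma setIntegral_det_one_add_eq_measureReal_of_norm_le (hK : IsClosed K) (hconv : Convex ℝ K)
    {h : E → E} {h' : E → E →L[ℝ] E} {c : ℝ≥0} (hc : c < 1)
    (hderiv : ∀ x ∈ K, HasFDerivWithinAt h (h' x) K x) (hbound : ∀ x ∈ K, ‖h' x‖₊ ≤ c)
    (hfr : ∀ x ∈ frontier K, h x = 0) (hmaps : MapsTo (fun x => x + h x) K K) :
    ∫ x in K, (1 + h' x).det ∂μ = μ.real K := by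
  have hbij := bijOn_id_add_of_lipschitzOnWith hK hc
    (hconv.lipschitzOnWith_of_nnnorm_hasFDerivWithin_le hderiv hbound) hfr hmaps
  have hsum : ∀ x ∈ K, HasFDerivWithinAt (fun x => x + h x) (1 + h' x) K x :=
    fun x hx => (hasFDerivWithinAt_id x K).add (hderiv x hx)
  calc ∫ x in K, (1 + h' x).det ∂μ = ∫ x in K, |(1 + h' x).det| • (1 : ℝ) ∂μ :=
        setIntegral_congr_fun hK.measurableSet fun x hx => by
          have hlt : ‖h' x‖ < 1 := (NNReal.coe_le_coe.2 (hbound x hx)).trans_lt hc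
          simp [abs_of_pos (det_one_add_pos_of_norm_lt_one hlt)]
    _ = ∫ _ in (fun x => x + h x) '' K, (1 : ℝ) ∂μ :=
        (integral_image_eq_integral_abs_det_fderiv_smul μ hK.measurableSet hsum hbij.injOn
          fun _ => 1).symm
    _ = μ.real K := by simp [hbij.image_eq]

theorem setIntegral_det_eq_measureReal_of_eqOn_frontier (hK : IsCompact K) (hconv : Convex ℝ K)
    {f : E → E} {f' : E → E →L[ℝ] E} (hderiv : ∀ x ∈ K, HasFDerivWithinAt f (f' x) K x)
    (hcont : ContinuousOn f' K) (hmaps : MapsTo f K K) (hfr : ∀ x ∈ frontier K, f x = x) :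
    ∫ x in K, (f' x).det ∂μ = μ.real K := by
  let A : E → E →L[ℝ] E := fun x => f' x - 1
  have hA : ContinuousOn A K := hcont.sub continuousOn_const
  choose P hPdeg hP using fun x =>
    exists_polynomial_eval_eq_det_one_add_smul (A x : E →ₗ[ℝ] E)
  replace hP : ∀ x t, (P x).eval t = (1 + t • A x).det := hP
  obtain ⟨Q, hQ⟩ := exists_polynomial_eval_eq_integral (μ := μ.restrict K) hPdeg fun t => by
    simp_rw [hP]
    exact (ContinuousLinearMap.continuous_det.comp_continuousOn
      (continuousOn_const.add (hA.const_smul t))).integrableOn_compact hK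
  obtain ⟨L, hL⟩ := hK.exists_bound_of_continuousOn hA
  have hsmall : ∀ t ∈ Ioo 0 (1 / (|L| + 1)), Q.eval t = μ.real K := by
    rintro t ⟨ht0, ht⟩
    have htL : t * (|L| + 1) < 1 := (lt_div_iff₀ (by positivity)).1 ht
    have hlt : t * |L| < 1 := by linarith
    have ht1 : t ≤ 1 := by nlinarith [abs_nonneg L]
    simp_rw [hQ, hP]
    refine setIntegral_det_one_add_eq_measureReal_of_norm_le μ hK.isClosed hconv
      (h := fun x => t • (f x - x)) (c := (t * |L|).toNNReal) (Real.toNNReal_lt_one.2 hlt)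
      (fun x hx => ((hderiv x hx).sub (hasFDerivWithinAt_id x K)).const_smul t)
      (fun x hx => ?_) (fun x hx => by simp [hfr x hx]) fun x hx => ?_
    · rw [← NNReal.coe_le_coe, coe_nnnorm, Real.coe_toNNReal _ (by positivity), norm_smul,
        Real.norm_of_nonneg ht0.le]
      exact mul_le_mul_of_nonneg_left ((hL x hx).trans (le_abs_self L)) ht0.le
    · simpa using hconv.add_smul_sub_mem hx (hmaps hx) ⟨ht0.le, ht1⟩
  have hpos : 0 < 1 / (|L| + 1) := by positivity
  have hQconst : Q = Polynomial.C (μ.real K) :=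
    Q.eq_of_infinite_eval_eq _ <| (Ioo_infinite hpos).mono fun t ht => by
      simpa using hsmall t ht
  simpa [hQconst, hP, A] using (hQ 1).symm

end VolumeOfSelfMaps

section Brouwer

lemma det_eq_zero_of_eventually_norm_eq {E : Type*} [NormedAddCommGroup E] [InnerProductSpace ℝ E]
    [FiniteDimensional ℝ E] {f : E → E} {D : E →L[ℝ] E} {x : E} {r : ℝ} (hr : r ≠ 0)
    (hf : HasFDerivAt f D x) (hnorm : ∀ᶠ y in 𝓝 x, ‖f y‖ = r) : D.det = 0 := by
  by_contra hdet
  have horth : ∀ v, inner ℝ (f x) (D v) = 0 := by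
    have hconst : HasFDerivAt (fun y => ‖f y‖ ^ 2) (0 : E →L[ℝ] ℝ) x :=
      (hasFDerivAt_const (r ^ 2) x).congr_of_eventuallyEq (hnorm.mono fun y hy => by simp [hy])
    intro v
    simpa using DFunLike.congr_fun (hf.norm_sq.unique hconst) v
  obtain ⟨v, hv⟩ := (LinearEquiv.ofIsUnitDet
    (f := (D : E →ₗ[ℝ] E)) (v := Module.finBasis ℝ E) (v' := Module.finBasis ℝ E)
    (by simpa [LinearMap.det_toMatrix] using hdet)).surjective (f x)
  replace hv : D v = f x := hv
  have hfx : f x = 0 := inner_self_eq_zero.1 (hv ▸ horth v)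
  exact hr (by simpa [hfx] using hnorm.self_of_nhds.symm)

/-- If `q` had no zero, `x ↦ (r / ‖q x‖) • q x` would be a `C¹` map of the ball onto its boundary
sphere that fixes the sphere. -/
lemma exists_eq_zero_of_contDiff_of_eq_on_sphere {E : Type*} [NormedAddCommGroup E]
    [InnerProductSpace ℝ E] [FiniteDimensional ℝ E] {q : E → E} (hq : ContDiff ℝ 1 q) {r : ℝ}
    (hr : 0 < r) (hsphere : ∀ x ∈ sphere (0 : E) r, q x = x) : ∃ x ∈ closedBall 0 r, q x = 0 := by
  by_contra! hne
  borelize E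
  let f : E → E := fun x => (r / ‖q x‖) • q x
  have hnorm : ∀ x, q x ≠ 0 → ‖f x‖ = r := fun x hx => by
    rw [norm_smul, norm_div, norm_norm, Real.norm_of_nonneg hr.le,
      div_mul_cancel₀ _ (norm_ne_zero_iff.2 hx)]
  have hf : ∀ x ∈ closedBall 0 r, ContDiffAt ℝ 1 f x := fun x hx =>
    (contDiffAt_const.div (hq.contDiffAt.norm ℝ (hne x hx)) (norm_ne_zero_iff.2 (hne x hx))).smul
      hq.contDiffAt
  have hderiv : ∀ x ∈ closedBall 0 r, HasFDerivAt f (fderiv ℝ f x) x := fun x hx =>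
    ((hf x hx).differentiableAt one_ne_zero).hasFDerivAt
  have hdet : ∀ x ∈ closedBall 0 r, (fderiv ℝ f x).det = 0 := fun x hx =>
    det_eq_zero_of_eventually_norm_eq hr.ne' (hderiv x hx)
      ((hq.continuous.continuousAt.eventually_ne (hne x hx)).mono hnorm)
  have hvol := setIntegral_det_eq_measureReal_of_eqOn_frontier Measure.addHaar
    (isCompact_closedBall 0 r) (convex_closedBall 0 r)
    (fun x hx => (hderiv x hx).hasFDerivWithinAt)
    (fun x hx => ((hf x hx).continuousAt_fderiv one_ne_zero).continuousWithinAt)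
    (fun x hx => by simp [hnorm x (hne x hx)]) fun x hx => by
      rw [frontier_closedBall 0 hr.ne'] at hx
      simp [f, hsphere x hx, mem_sphere_zero_iff_norm.1 hx, hr.ne']
  rw [setIntegral_congr_fun measurableSet_closedBall hdet, integral_zero] at hvol
  have hpos : 0 < Measure.addHaar.real (closedBall (0 : E) r) :=
    ENNReal.toReal_pos (measure_closedBall_pos _ _ hr).ne' measure_closedBall_lt_top.ne
  exact hpos.ne hvol

lemma exists_eq_zero_of_continuous_of_eq_of_le_norm {E : Type*} [NormedAddCommGroup E]
    [InnerProductSpace ℝ E] [FiniteDimensional ℝ E] {f : E → E} (hf : Continuous f) {r : ℝ}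
    (heq : ∀ x, r ≤ ‖x‖ → f x = x) : ∃ x, f x = 0 := by
  by_contra! hne
  have hnear : ∀ᶠ x in 𝓝ˢ {x : E | |r| + 1 ≤ ‖x‖}, f x = x := by
    refine Filter.mem_of_superset ((isOpen_lt continuous_const continuous_norm).mem_nhdsSet.2 ?_)
      fun x (hx : |r| < ‖x‖) => heq x ((le_abs_self r).trans hx.le)
    exact fun x (hx : |r| + 1 ≤ ‖x‖) => show |r| < ‖x‖ by linarith
  obtain ⟨q, hq, happrox, hqeq, -⟩ := hf.exists_contDiff_approx_and_eqOn 1 hf.norm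
    (fun x => norm_pos_iff.2 (hne x)) (isClosed_le continuous_const continuous_norm) hnear
    (contDiffOn_id.congr fun x hx => hx)
  obtain ⟨x, -, hx⟩ := exists_eq_zero_of_contDiff_of_eq_on_sphere hq (r := |r| + 1) (by positivity)
    fun x hx => by
      have hxr : |r| + 1 ≤ ‖x‖ := (mem_sphere_zero_iff_norm.1 hx).ge
      rw [hqeq hxr, heq x (by linarith [le_abs_self r])]
  simpa [hx] using happrox x

lemma exists_isFixedPt_of_continuous_of_norm_le {E : Type*} [NormedAddCommGroup E]
    [InnerProductSpace ℝ E] [FiniteDimensional ℝ E] {f : E → E} (hf : Continuous f) {R : ℝ}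
    (hbound : ∀ x, ‖f x‖ ≤ R) : ∃ x, Function.IsFixedPt f x := by
  let χ : E → ℝ := fun x => max 0 (min 1 (R + 1 - ‖x‖))
  obtain ⟨x, hx⟩ := exists_eq_zero_of_continuous_of_eq_of_le_norm (f := fun x => x - χ x • f x)
    (r := R + 1) (by fun_prop) fun x hx => by
      have hχ : χ x = 0 := max_eq_left ((min_le_right _ _).trans (by linarith))
      simp [hχ]
  have hxR : ‖x‖ ≤ R := by
    have hχ : ‖χ x‖ ≤ 1 := by
      rw [Real.norm_of_nonneg (le_max_left _ _)]
      exact max_le zero_le_one (min_le_left _ _)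
    calc ‖x‖ = ‖χ x‖ * ‖f x‖ := by rw [← norm_smul, ← sub_eq_zero.1 hx]
      _ ≤ 1 * R := mul_le_mul hχ (hbound x) (norm_nonneg _) zero_le_one
      _ = R := one_mul R
  have hχ : χ x = 1 := by
    simp only [χ]
    rw [min_eq_left (by linarith), max_eq_right zero_le_one]
  exact ⟨x, by simpa [hχ, sub_eq_zero, Function.IsFixedPt, eq_comm] using hx⟩

lemma exists_continuous_retraction_of_isClosed_of_convex {E : Type*} [NormedAddCommGroup E]
    [InnerProductSpace ℝ E] [CompleteSpace E] {K : Set E} (hne : K.Nonempty) (hK : IsClosed K)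
    (hconv : Convex ℝ K) :
    ∃ p : E → E, Continuous p ∧ (∀ x, p x ∈ K) ∧ ∀ x ∈ K, p x = x := by
  choose p hpK hp using fun x => exists_norm_eq_iInf_of_complete_convex hne hK.isComplete hconv x
  have hinner : ∀ x, ∀ y ∈ K, inner ℝ (x - p x) (y - p x) ≤ 0 := fun x =>
    (norm_eq_iInf_iff_real_inner_le_zero hconv (hpK x)).1 (hp x)
  have hlip : LipschitzWith 1 p := LipschitzWith.of_dist_le_mul fun x y => by
    have hsq : ‖p x - p y‖ * ‖p x - p y‖ ≤ ‖x - y‖ * ‖p x - p y‖ :=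
      calc ‖p x - p y‖ * ‖p x - p y‖ = inner ℝ (p x - p y) (p x - p y) :=
            (real_inner_self_eq_norm_mul_norm _).symm
        _ = inner ℝ (x - y) (p x - p y) + (inner ℝ (x - p x) (p y - p x)
              + inner ℝ (y - p y) (p x - p y)) := by
            simp only [inner_sub_left, inner_sub_right]
            ring
        _ ≤ inner ℝ (x - y) (p x - p y) := by
            linarith [hinner x _ (hpK y), hinner y _ (hpK x)]
        _ ≤ ‖x - y‖ * ‖p x - p y‖ := real_inner_le_norm _ _
    rcases (norm_nonneg (p x - p y)).eq_or_lt with h0 | hpos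
    · simp [dist_eq_norm, ← h0]
    · simpa [dist_eq_norm] using le_of_mul_le_mul_right hsq hpos
  refine ⟨p, hlip.continuous, hpK, fun x hx => ?_⟩
  exact (sub_eq_zero.1 (real_inner_self_nonpos.1 (hinner x x hx))).symm

theorem exists_isFixedPt_of_isCompact_of_convex {E : Type*} [AddCommGroup E] [Module ℝ E]
    [TopologicalSpace E] [IsTopologicalAddGroup E] [ContinuousSMul ℝ E] [T2Space E]
    [FiniteDimensional ℝ E] {K : Set E} (hne : K.Nonempty) (hK : IsCompact K)
    (hconv : Convex ℝ K) {f : E → E} (hf : ContinuousOn f K) (hmaps : MapsTo f K K) :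
    ∃ x ∈ K, Function.IsFixedPt f x := by
  let e : E ≃L[ℝ] EuclideanSpace ℝ (Fin (Module.finrank ℝ E)) := toEuclidean
  have hK' : IsCompact (e '' K) := hK.image e.continuous
  obtain ⟨p, hp, hpK, hpid⟩ := exists_continuous_retraction_of_isClosed_of_convex
    (hne.image e) hK'.isClosed (hconv.linear_image e.toLinearMap)
  have hpK' : ∀ y, e.symm (p y) ∈ K := fun y => by
    obtain ⟨x, hx, hxy⟩ := hpK y
    simpa [← hxy] using hx
  obtain ⟨R, hR⟩ := hK'.isBounded.exists_norm_le
  obtain ⟨y, hy⟩ := exists_isFixedPt_of_continuous_of_norm_le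
    (f := fun y => e (f (e.symm (p y))))
    (e.continuous.comp (hf.comp_continuous (e.symm.continuous.comp hp) hpK'))
    fun y => hR _ (mem_image_of_mem e (hmaps (hpK' y)))
  have hyK : y ∈ e '' K := hy ▸ mem_image_of_mem e (hmaps (hpK' y))
  refine ⟨e.symm y, ?_, e.injective ?_⟩
  · simpa [hpid y hyK] using hpK' y
  · simpa [hpid y hyK] using hy.eq

end Brouwer

section WeightedKernel

/-- The stochastic matrix with entries `C i j * w j / ∑ k, C i k * w k`, so that `Mg C g x` is
`weightedKernel C (g ∘ x)`. A row on which the sum vanishes is the zero row. -/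
noncomputable def weightedKernel {ι : Type*} [Fintype ι] (C : Matrix ι ι ℝ) (w : ι → ℝ) :
    Matrix ι ι ℝ :=
  of fun i j => C i j * w j / ∑ k, C i k * w k

/-- `u` is the only stochastic row vector that is invariant under `M`; for `M = Mg C g x` it is
`u_g(x)`. -/
def IsUniqueInvariant {ι : Type*} [Fintype ι] (M : Matrix ι ι ℝ) (u : ι → ℝ) : Prop :=
  u ∈ stdSimplex ℝ ι ∧ u ᵥ* M = u ∧ ∀ v ∈ stdSimplex ℝ ι, v ᵥ* M = v → v = u

variable {ι : Type*} [Fintype ι] {C M : Matrix ι ι ℝ} {w u : ι → ℝ} {o i j : ι} {R : ℝ}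

lemma exists_forall_sum_le_mul (C : Matrix ι ι ℝ) :
    ∃ R : ℝ, ∀ i j, 0 < C i j → ∑ k, C i k ≤ R * C i j := by
  obtain ⟨R, hR⟩ := Finite.exists_le fun p : ι × ι => (∑ k, C p.1 k) / C p.1 p.2
  exact ⟨R, fun i j hij => (div_le_iff₀ hij).1 (hR (i, j))⟩

lemma one_le_of_sum_le_mul (hC : ∀ i j, 0 ≤ C i j) (hij : 0 < C i j)
    (hR : ∑ k, C i k ≤ R * C i j) : 1 ≤ R :=
  (le_mul_iff_one_le_left hij).1
    ((Finset.single_le_sum (fun k _ => hC i k) (Finset.mem_univ j)).trans hR)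

lemma sum_mul_pos (hC : ∀ i j, 0 ≤ C i j) (hw : ∀ j, 0 < w j) (hij : 0 < C i j) :
    0 < ∑ k, C i k * w k :=
  Finset.sum_pos' (fun k _ => mul_nonneg (hC i k) (hw k).le)
    ⟨j, Finset.mem_univ j, mul_pos hij (hw j)⟩

lemma weightedKernel_nonneg (hC : ∀ i j, 0 ≤ C i j) (hw : ∀ j, 0 < w j) (i j : ι) :
    0 ≤ weightedKernel C w i j :=
  div_nonneg (mul_nonneg (hC i j) (hw j).le)
    (Finset.sum_nonneg fun k _ => mul_nonneg (hC i k) (hw k).le)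

lemma le_mul_weightedKernel (hC : ∀ i j, 0 ≤ C i j) (hw : ∀ j, 0 < w j) (hij : 0 < C i j)
    (hR : ∑ k, C i k ≤ R * C i j) {G : ℝ} (hG : ∀ k, 0 < C i k → w k ≤ G) :
    w j ≤ R * G * weightedKernel C w i j := by
  have hsum : ∑ k, C i k * w k ≤ R * G * C i j := by
    have hG0 : 0 ≤ G := (hw j).le.trans (hG j hij)
    calc ∑ k, C i k * w k ≤ ∑ k, C i k * G := Finset.sum_le_sum fun k _ => by
          rcases (hC i k).eq_or_lt with h0 | hpos
          · simp [← h0]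
          · exact mul_le_mul_of_nonneg_left (hG k hpos) (hC i k)
      _ = (∑ k, C i k) * G := (Finset.sum_mul ..).symm
      _ ≤ R * C i j * G := mul_le_mul_of_nonneg_right hR hG0
      _ = R * G * C i j := by ring
  rw [weightedKernel, of_apply, mul_div_assoc', le_div_iff₀ (sum_mul_pos hC hw hij)]
  calc w j * ∑ k, C i k * w k ≤ w j * (R * G * C i j) :=
        mul_le_mul_of_nonneg_left hsum (hw j).le
    _ = R * G * (C i j * w j) := by ring

lemma mul_one_sub_weightedKernel_diag_le (hC : ∀ i j, 0 ≤ C i j) (hw : ∀ j, 0 < w j)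
    (hoo : 0 < C o o) (hR : ∑ k, C o k ≤ R * C o o) {G : ℝ} (hG0 : 0 ≤ G)
    (hG : ∀ k, k ≠ o → w k ≤ G) : w o * (1 - weightedKernel C w o o) ≤ R * G := by
  classical
  have hpos := sum_mul_pos hC hw hoo
  have hoff : ∑ k, C o k * w k - C o o * w o ≤ R * G * C o o := by
    rw [← Finset.sum_erase_eq_sub (Finset.mem_univ o)]
    calc ∑ k ∈ Finset.univ.erase o, C o k * w k ≤ ∑ k ∈ Finset.univ.erase o, C o k * G :=
          Finset.sum_le_sum fun k hk =>
            mul_le_mul_of_nonneg_left (hG k (Finset.ne_of_mem_erase hk)) (hC o k)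
      _ = (∑ k ∈ Finset.univ.erase o, C o k) * G := (Finset.sum_mul ..).symm
      _ ≤ (∑ k, C o k) * G := mul_le_mul_of_nonneg_right
          (Finset.sum_le_sum_of_subset_of_nonneg (Finset.erase_subset _ _) fun k _ _ => hC o k) hG0
      _ ≤ R * C o o * G := mul_le_mul_of_nonneg_right hR hG0
      _ = R * G * C o o := by ring
  have hdiag : C o o * w o ≤ ∑ k, C o k * w k :=
    Finset.single_le_sum (f := fun k => C o k * w k) (fun k _ => mul_nonneg (hC o k) (hw k).le)
      (Finset.mem_univ o)
  have hR0 : 0 ≤ R := zero_le_one.trans (one_le_of_sum_le_mul hC hoo hR)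
  rw [weightedKernel, of_apply, one_sub_div hpos.ne', mul_div_assoc', div_le_iff₀ hpos]
  calc w o * (∑ k, C o k * w k - C o o * w o) ≤ w o * (R * G * C o o) :=
        mul_le_mul_of_nonneg_left hoff (hw o).le
    _ = R * G * (C o o * w o) := by ring
    _ ≤ R * G * ∑ k, C o k * w k := mul_le_mul_of_nonneg_left hdiag (mul_nonneg hR0 hG0)

lemma mul_le_mul_one_sub_diag_of_vecMul_eq (hM : ∀ i j, 0 ≤ M i j) (hu : ∀ i, 0 ≤ u i)
    (hinv : u ᵥ* M = u) (hio : i ≠ o) : u i * M i o ≤ u o * (1 - M o o) := by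
  classical
  have hsum : u i * M i o + u o * M o o ≤ u o := by
    calc u i * M i o + u o * M o o = ∑ k ∈ {i, o}, u k * M k o := by
          rw [Finset.sum_pair hio]
      _ ≤ ∑ k, u k * M k o := Finset.sum_le_sum_of_subset_of_nonneg (Finset.subset_univ _)
          fun k _ _ => mul_nonneg (hu k) (hM k o)
      _ = u o := congr_fun hinv o
  linarith

lemma mul_le_of_vecMul_eq (hM : ∀ i j, 0 ≤ M i j) (hu : ∀ i, 0 ≤ u i) (hinv : u ᵥ* M = u)
    (i j : ι) : u i * M i j ≤ u j :=
  calc u i * M i j ≤ ∑ k, u k * M k j := Finset.single_le_sum (f := fun k => u k * M k j)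
        (fun k _ => mul_nonneg (hu k) (hM k j)) (Finset.mem_univ i)
    _ = u j := congr_fun hinv j

lemma exists_pos_of_pow_pos [DecidableEq ι] (hC : ∀ i j, 0 ≤ C i j) {A : Finset ι} (ho : o ∈ A)
    {m : ℕ} (hi : i ∉ A) (hm : 0 < (C ^ m) i o) : ∃ i ∉ A, ∃ j ∈ A, 0 < C i j := by
  by_contra! hcross
  have htri : BlockTriangular C (· ∉ A) := fun i j hij => by
    obtain ⟨-, hi, hj⟩ : _ ∧ i ∉ A ∧ j ∈ A := by simpa [lt_iff_le_not_ge] using hij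
    exact le_antisymm (hcross i hi j hj) (hC i j)
  exact hm.ne' (htri.pow m (by simp [ho, hi, lt_iff_le_not_ge]))

lemma le_pow_mul_of_forall_exists_le {f : ι → ℝ} {q : ℝ} (hq : 1 ≤ q) (ho : 0 ≤ f o)
    (hstep : ∀ A : Finset ι, o ∈ A → A ≠ Finset.univ → ∃ i ∉ A, ∃ j ∈ A, f i ≤ q * f j) (i : ι) :
    f i ≤ q ^ (Fintype.card ι - 1) * f o := by
  classical
  have hgrow : ∀ m < Fintype.card ι, ∃ A : Finset ι, o ∈ A ∧ A.card = m + 1 ∧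
      ∀ i ∈ A, f i ≤ q ^ m * f o := by
    intro m hm
    induction m with
    | zero => exact ⟨{o}, by simp⟩
    | succ m ih =>
      obtain ⟨A, hoA, hcard, hA⟩ := ih (by lia)
      obtain ⟨i, hi, j, hj, hij⟩ := hstep A hoA fun h => by
        rw [h, Finset.card_univ] at hcard
        lia
      refine ⟨insert i A, Finset.mem_insert_of_mem hoA, by simp [hi, hcard], ?_⟩
      simp only [Finset.forall_mem_insert]
      refine ⟨?_, fun k hk => (hA k hk).trans ?_⟩
      · calc f i ≤ q * f j := hij
          _ ≤ q * (q ^ m * f o) := by gcongr; exact hA j hj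
          _ = q ^ (m + 1) * f o := by ring
      · gcongr
        lia
  obtain ⟨A, -, hcard, hA⟩ := hgrow (Fintype.card ι - 1)
    (Nat.sub_lt (Fintype.card_pos_iff.2 ⟨o⟩) one_pos)
  have hAuniv : A = Finset.univ := by
    rw [← Finset.card_eq_iff_eq_univ, hcard]
    exact Nat.sub_add_cancel (Fintype.card_pos_iff.2 ⟨o⟩)
  exact hA i (hAuniv ▸ Finset.mem_univ i)

lemma mul_weight_le_of_pos (hC : ∀ i j, 0 ≤ C i j) (hoo : 0 < C o o)
    (hR : ∀ i j, 0 < C i j → ∑ k, C i k ≤ R * C i j) {G : ℝ} (hG0 : 0 ≤ G)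
    (hw : ∀ j, 0 < w j) (hwo : ∀ j, w j ≤ w o) (hG : ∀ j, j ≠ o → w j ≤ G)
    (hu : u ∈ stdSimplex ℝ ι) (hinv : u ᵥ* weightedKernel C w = u) (hio : i ≠ o)
    (hpos : 0 < C i o) : u i * w o ≤ R * G * R := by
  have hR0 : 0 ≤ R := zero_le_one.trans (one_le_of_sum_le_mul hC hoo (hR o o hoo))
  calc u i * w o ≤ u i * (R * w o * weightedKernel C w i o) :=
        mul_le_mul_of_nonneg_left
          (le_mul_weightedKernel hC hw hpos (hR i o hpos) fun k _ => hwo k) (hu.1 i)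
    _ = R * w o * (u i * weightedKernel C w i o) := by ring
    _ ≤ R * w o * (u o * (1 - weightedKernel C w o o)) :=
        mul_le_mul_of_nonneg_left
          (mul_le_mul_one_sub_diag_of_vecMul_eq (weightedKernel_nonneg hC hw) hu.1 hinv hio)
          (mul_nonneg hR0 (hw o).le)
    _ = R * u o * (w o * (1 - weightedKernel C w o o)) := by ring
    _ ≤ R * u o * (R * G) :=
        mul_le_mul_of_nonneg_left
          (mul_one_sub_weightedKernel_diag_le hC hw hoo (hR o o hoo) hG0 hG)
          (mul_nonneg hR0 (hu.1 o))
    _ = u o * (R * G * R) := by ring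
    _ ≤ R * G * R :=
        mul_le_of_le_one_left (by positivity) (mem_Icc_of_mem_stdSimplex hu o).2

lemma le_mul_of_pos_of_vecMul_weightedKernel_eq (hC : ∀ i j, 0 ≤ C i j)
    (hR : ∑ k, C i k ≤ R * C i j) {G : ℝ} (hw1 : ∀ j, 1 ≤ w j) (hG : ∀ k, 0 < C i k → w k ≤ G)
    (hu : ∀ i, 0 ≤ u i) (hinv : u ᵥ* weightedKernel C w = u) (hij : 0 < C i j) :
    u i ≤ R * G * u j := by
  have hw : ∀ j, 0 < w j := fun j => one_pos.trans_le (hw1 j)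
  have hRG : 0 ≤ R * G :=
    mul_nonneg (zero_le_one.trans (one_le_of_sum_le_mul hC hij hR)) ((hw j).le.trans (hG j hij))
  calc u i ≤ u i * (R * G * weightedKernel C w i j) :=
        le_mul_of_one_le_right (hu i)
          ((hw1 j).trans (le_mul_weightedKernel hC hw hij hR hG))
    _ = R * G * (u i * weightedKernel C w i j) := by ring
    _ ≤ R * G * u j := mul_le_mul_of_nonneg_left
        (mul_le_of_vecMul_eq (weightedKernel_nonneg hC hw) hu hinv i j) hRG

/-- The numbers `u i * w o` with `i ≠ o` are controlled along the paths that lead to `o`: a step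
into `o` has probability bounded below, since `w o` is the largest weight, and balances against the
small probability of leaving `o`, while any other step costs a factor `R * G`. -/
lemma mul_weight_le_of_vecMul_weightedKernel_eq [DecidableEq ι] (hC : ∀ i j, 0 ≤ C i j)
    (hoo : 0 < C o o) (hreach : ∀ i, ∃ m : ℕ, 0 < (C ^ m) i o)
    (hR : ∀ i j, 0 < C i j → ∑ k, C i k ≤ R * C i j) {G : ℝ} (hG1 : 1 ≤ G)
    (hw1 : ∀ j, 1 ≤ w j) (hwo : ∀ j, w j ≤ w o) (hG : ∀ j, j ≠ o → w j ≤ G)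
    (hu : u ∈ stdSimplex ℝ ι) (hinv : u ᵥ* weightedKernel C w = u) (hi : i ≠ o) :
    u i * w o ≤ (R * G) ^ (Fintype.card ι - 1) * R := by
  have hw : ∀ j, 0 < w j := fun j => one_pos.trans_le (hw1 j)
  have hR1 : 1 ≤ R := one_le_of_sum_le_mul hC hoo (hR o o hoo)
  let f : ι → ℝ := Function.update (fun i => u i * w o) o R
  have hfo : f o = R := Function.update_self ..
  have hf : ∀ i, i ≠ o → f i = u i * w o := fun i hi => Function.update_of_ne hi ..
  have hstep : ∀ A : Finset ι, o ∈ A → A ≠ Finset.univ →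
      ∃ i ∉ A, ∃ j ∈ A, f i ≤ R * G * f j := by
    intro A hoA hA
    obtain ⟨k, hk⟩ := not_forall.1 (mt Finset.eq_univ_iff_forall.2 hA)
    obtain ⟨m, hm⟩ := hreach k
    obtain ⟨i, hi, j, hj, hij⟩ := exists_pos_of_pow_pos hC hoA hk hm
    have hio : i ≠ o := fun h => hi (h ▸ hoA)
    rcases (hC i o).lt_or_eq with hpos | hzero
    · refine ⟨i, hi, o, hoA, ?_⟩
      rw [hf i hio, hfo]
      exact mul_weight_le_of_pos hC hoo hR (zero_le_one.trans hG1) hw hwo hG hu hinv hio hpos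
    · have hne : ∀ k, 0 < C i k → k ≠ o := fun k hk h => (h ▸ hk).ne hzero
      refine ⟨i, hi, j, hj, ?_⟩
      rw [hf i hio, hf j (hne j hij), ← mul_assoc]
      exact mul_le_mul_of_nonneg_right (le_mul_of_pos_of_vecMul_weightedKernel_eq hC (hR i j hij)
        hw1 (fun k hk => hG k (hne k hk)) hu.1 hinv hij) (hw o).le
  calc u i * w o = f i := (hf i hi).symm
    _ ≤ (R * G) ^ (Fintype.card ι - 1) * f o :=
      le_pow_mul_of_forall_exists_le (one_le_mul_of_one_le_of_one_le hR1 hG1)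
        (hfo ▸ zero_le_one.trans hR1) hstep i
    _ = (R * G) ^ (Fintype.card ι - 1) * R := by rw [hfo]

lemma one_sub_mul_weight_le [DecidableEq ι] (hC : ∀ i j, 0 ≤ C i j)
    (hoo : 0 < C o o) (hreach : ∀ i, ∃ m : ℕ, 0 < (C ^ m) i o)
    (hR : ∀ i j, 0 < C i j → ∑ k, C i k ≤ R * C i j) {G : ℝ} (hG1 : 1 ≤ G)
    (hw1 : ∀ j, 1 ≤ w j) (hwo : ∀ j, w j ≤ w o) (hG : ∀ j, j ≠ o → w j ≤ G)
    (hu : u ∈ stdSimplex ℝ ι) (hinv : u ᵥ* weightedKernel C w = u) :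
    (1 - u o) * w o ≤ Fintype.card ι * R ^ Fintype.card ι * G ^ (Fintype.card ι - 1) := by
  have hR0 : 0 ≤ R := zero_le_one.trans (one_le_of_sum_le_mul hC hoo (hR o o hoo))
  have hsum : 1 - u o = ∑ i ∈ Finset.univ.erase o, u i := by
    rw [Finset.sum_erase_eq_sub (Finset.mem_univ o), hu.2]
  have hcard : R ^ Fintype.card ι = R ^ (Fintype.card ι - 1) * R :=
    (pow_sub_one_mul (Fintype.card_pos_iff.2 ⟨o⟩).ne' R).symm
  calc (1 - u o) * w o = ∑ i ∈ Finset.univ.erase o, u i * w o := by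
        rw [hsum, Finset.sum_mul]
    _ ≤ ∑ _ ∈ Finset.univ.erase o, (R * G) ^ (Fintype.card ι - 1) * R :=
        Finset.sum_le_sum fun i hi => mul_weight_le_of_vecMul_weightedKernel_eq hC hoo hreach hR
          hG1 hw1 hwo hG hu hinv (Finset.ne_of_mem_erase hi)
    _ ≤ ∑ _ : ι, (R * G) ^ (Fintype.card ι - 1) * R :=
        Finset.sum_le_sum_of_subset_of_nonneg (Finset.erase_subset _ _) fun _ _ _ => by positivity
    _ = Fintype.card ι * R ^ Fintype.card ι * G ^ (Fintype.card ι - 1) := by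
        rw [Finset.sum_const, Finset.card_univ, nsmul_eq_mul, mul_pow, hcard]
        ring

end WeightedKernel

section Continuity

variable {ι : Type*} [Fintype ι]

lemma continuousOn_of_isUniqueInvariant {X : Type*} [TopologicalSpace X] {s : Set X}
    {M : X → Matrix ι ι ℝ} (hM : ContinuousOn M s) {u : X → ι → ℝ}
    (hu : ∀ x ∈ s, IsUniqueInvariant (M x) (u x)) : ContinuousOn u s := by
  intro x hx
  have hmem : ∀ᶠ z in 𝓝[s] x, z ∈ s := self_mem_nhdsWithin
  refine (isCompact_stdSimplex ℝ ι).tendsto_nhds_of_unique_mapClusterPt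
    (hmem.mono fun z hz => (hu z hz).1) fun v hv hcluster => (hu x hx).2.2 v hv ?_
  obtain ⟨U, hU, hlim⟩ := mapClusterPt_iff_ultrafilter.1 hcluster
  have hvec : Filter.Tendsto (fun z => u z ᵥ* M z) U (𝓝 (v ᵥ* M x)) :=
    ((continuous_fst.matrix_vecMul continuous_snd).tendsto (v, M x)).comp
      (hlim.prodMk_nhds ((hM x hx).mono_left hU))
  exact tendsto_nhds_unique (hvec.congr' (hU (hmem.mono fun z hz => (hu z hz).2.1))) hlim

lemma continuousOn_weightedKernel {C : Matrix ι ι ℝ} (hC : ∀ i j, 0 ≤ C i j)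
    (hrow : ∀ i, ∃ j, 0 < C i j) :
    ContinuousOn (weightedKernel C) {w | ∀ j, 0 < w j} :=
  continuousOn_pi.2 fun i => continuousOn_pi.2 fun j =>
    ContinuousOn.div (by fun_prop) (by fun_prop) fun _ hw =>
      (sum_mul_pos hC hw (hrow i).choose_spec).ne'

end Continuity

lemma mul_exp_le_of_mul_le_deriv {g g' : ℝ → ℝ} {s : Set ℝ} (hs : Convex ℝ s)
    (hg : ∀ x ∈ s, HasDerivWithinAt g (g' x) s x) {L : ℝ} (hL : ∀ x ∈ s, L * g x ≤ g' x)
    {a b : ℝ} (ha : a ∈ s) (hb : b ∈ s) (hab : a ≤ b) : g a * Real.exp (L * (b - a)) ≤ g b := by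
  have hderiv : ∀ x ∈ s, HasDerivWithinAt (fun x => g x * Real.exp (-(L * x)))
      (g' x * Real.exp (-(L * x)) + g x * (Real.exp (-(L * x)) * -(L * 1))) s x := fun x hx =>
    (hg x hx).mul ((hasDerivWithinAt_id x s).const_mul L).neg.exp
  have hmono : MonotoneOn (fun x => g x * Real.exp (-(L * x))) s :=
    monotoneOn_of_hasDerivWithinAt_nonneg hs (fun x hx => (hderiv x hx).continuousWithinAt)
      (fun x hx => (hderiv x (interior_subset hx)).mono interior_subset) fun x hx => by
        have := mul_nonneg (sub_nonneg.2 (hL x (interior_subset hx))) (Real.exp_pos (-(L * x))).le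
        linarith
  calc g a * Real.exp (L * (b - a)) = g a * Real.exp (-(L * a)) * Real.exp (L * b) := by
        rw [mul_assoc, ← Real.exp_add]
        ring_nf
    _ ≤ g b * Real.exp (-(L * b)) * Real.exp (L * b) :=
        mul_le_mul_of_nonneg_right (hmono ha hb hab) (Real.exp_pos _).le
    _ = g b := by rw [mul_assoc, ← Real.exp_add, neg_add_cancel, Real.exp_zero, mul_one]

namespace IsAdmissible

variable {g g' : ℝ → ℝ} {a b : ℝ}

protected lemma continuousOn (hg : IsAdmissible g g') : ContinuousOn g (Icc 0 1) :=
  fun x hx => (hg.1 x hx).continuousWithinAt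

protected lemma monotoneOn (hg : IsAdmissible g g') : MonotoneOn g (Icc 0 1) :=
  monotoneOn_of_hasDerivWithinAt_nonneg (convex_Icc 0 1) hg.continuousOn
    (fun x hx => (hg.1 x (interior_subset hx)).mono interior_subset)
    fun x hx => (hg.2.2.2.2 x (interior_subset hx)).le

protected lemma pos (hg : IsAdmissible g g') (ha : a ∈ Icc (0 : ℝ) 1) : 0 < g a :=
  hg.2.2.2.1 a ha

lemma one_le (hg : IsAdmissible g g') (ha : a ∈ Icc (0 : ℝ) 1) : 1 ≤ g a :=
  hg.2.2.1 ▸ hg.monotoneOn (left_mem_Icc.2 zero_le_one) ha ha.1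

lemma mul_one_add_le {L : ℝ} (hg : IsAdmissible g g') (hL : L ∈ lowerBounds (ratioSet g g'))
    (ha : a ∈ Icc (0 : ℝ) 1) (hb : b ∈ Icc (0 : ℝ) 1) (hab : a ≤ b) :
    g a * (1 + L * (b - a)) ≤ g b := by
  calc g a * (1 + L * (b - a)) ≤ g a * Real.exp (L * (b - a)) :=
        mul_le_mul_of_nonneg_left (by linarith [Real.add_one_le_exp (L * (b - a))])
          (hg.pos ha).le
    _ ≤ g b := mul_exp_le_of_mul_le_deriv (convex_Icc 0 1) hg.1
        (fun x hx => (le_div_iff₀ (hg.pos hx)).1 (hL (mem_image_of_mem _ hx))) ha hb hab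

lemma pow_le_apply_one_sub {ε εn : ℝ} {m : ℕ} (hg : IsAdmissible g g') (hε0 : 0 ≤ ε)
    (hε1 : ε ≤ εn) (hεn1 : εn ≤ 1) (hgn : g εn ^ m ≤ g (1 - εn)) : g ε ^ m ≤ g (1 - εn) := by
  have hεI : ε ∈ Icc (0 : ℝ) 1 := ⟨hε0, hε1.trans hεn1⟩
  have hεnI : εn ∈ Icc (0 : ℝ) 1 := ⟨hε0.trans hε1, hεn1⟩
  exact (pow_le_pow_left₀ (hg.pos hεI).le (hg.monotoneOn hεI hεnI hε1) m).trans hgn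

lemma mul_pow_le_mul_apply_one_sub {ε εn c L : ℝ} {m : ℕ} (hg : IsAdmissible g g') (hε0 : 0 < ε)
    (hε1 : ε < εn) (hεn1 : εn ≤ 1) (hgn : g εn ^ m ≤ g (1 - εn))
    (hL : L ∈ lowerBounds (ratioSet g g')) (hc : 0 ≤ c) (hcL : c / (ε * (εn - ε)) ≤ L) :
    c * g ε ^ m ≤ ε * g (1 - ε) := by
  have hεI : 1 - ε ∈ Icc (0 : ℝ) 1 := ⟨by linarith, by linarith⟩
  have hεnI : 1 - εn ∈ Icc (0 : ℝ) 1 := ⟨by linarith, by linarith⟩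
  have hgpos := hg.pos hεnI
  have hcL' : c ≤ L * (ε * (εn - ε)) :=
    (div_le_iff₀ (mul_pos hε0 (sub_pos.2 hε1))).1 hcL
  calc c * g ε ^ m ≤ c * g (1 - εn) :=
        mul_le_mul_of_nonneg_left (hg.pow_le_apply_one_sub hε0.le hε1.le hεn1 hgn) hc
    _ ≤ L * (ε * (εn - ε)) * g (1 - εn) := mul_le_mul_of_nonneg_right hcL' hgpos.le
    _ ≤ ε * (g (1 - εn) * (1 + L * ((1 - ε) - (1 - εn)))) := by
        linarith [mul_pos hε0 hgpos]
    _ ≤ ε * g (1 - ε) :=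
        mul_le_mul_of_nonneg_left (hg.mul_one_add_le hL hεnI hεI (by linarith)) hε0.le

end IsAdmissible

section FixedPoint

variable {ι : Type*} [Fintype ι] {o : ι} {g g' : ℝ → ℝ} {ε : ℝ} {x u : ι → ℝ}

lemma add_le_one_of_mem_stdSimplex (hx : x ∈ stdSimplex ℝ ι) {j : ι} (hj : j ≠ o) :
    x o + x j ≤ 1 := by
  classical
  calc x o + x j = ∑ k ∈ {o, j}, x k := by rw [Finset.sum_pair hj.symm]
    _ ≤ ∑ k, x k :=
        Finset.sum_le_sum_of_subset_of_nonneg (Finset.subset_univ _) fun k _ _ => hx.1 k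
    _ = 1 := hx.2

variable [DecidableEq ι] {C : Matrix ι ι ℝ}

lemma exists_pos_of_forall_pow_pos (hC : ∀ i j, 0 ≤ C i j) (hoo : 0 < C o o)
    (hreach : ∀ i, ∃ m : ℕ, 0 < (C ^ m) i o) (i : ι) : ∃ j, 0 < C i j := by
  rcases eq_or_ne i o with rfl | hio
  · exact ⟨i, hoo⟩
  · obtain ⟨m, hm⟩ := hreach i
    obtain ⟨k, hk, j, -, hkj⟩ := exists_pos_of_pow_pos hC (A := {i}ᶜ) (by simpa using hio.symm)
      (by simp) hm
    obtain rfl : k = i := by simpa using hk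
    exact ⟨j, hkj⟩

lemma one_sub_le_of_vecMul_weightedKernel_eq (hC : ∀ i j, 0 ≤ C i j) (hoo : 0 < C o o)
    (hreach : ∀ i, ∃ m : ℕ, 0 < (C ^ m) i o) {R : ℝ}
    (hR : ∀ i j, 0 < C i j → ∑ k, C i k ≤ R * C i j) {εn : ℝ} (hε0 : 0 < ε) (hε1 : ε < εn)
    (hεn1 : εn < 1) (hg : IsAdmissible g g')
    (hgn : g εn ^ (Fintype.card ι - 1) ≤ g (1 - εn)) {L : ℝ}
    (hL : L ∈ lowerBounds (ratioSet g g'))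
    (hL' : Fintype.card ι * R ^ Fintype.card ι / (ε * (εn - ε)) ≤ L) (hx : x ∈ stdSimplex ℝ ι)
    (hxo : 1 - ε ≤ x o) (hu : u ∈ stdSimplex ℝ ι) (hinv : u ᵥ* weightedKernel C (g ∘ x) = u) :
    1 - ε ≤ u o := by
  have hxI : ∀ j, x j ∈ Icc (0 : ℝ) 1 := mem_Icc_of_mem_stdSimplex hx
  have hεI : ε ∈ Icc (0 : ℝ) 1 := ⟨hε0.le, by linarith⟩
  have hεI' : 1 - ε ∈ Icc (0 : ℝ) 1 := ⟨by linarith, by linarith⟩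
  have hεnI' : 1 - εn ∈ Icc (0 : ℝ) 1 := ⟨by linarith, by linarith⟩
  have hgo : g (1 - ε) ≤ g (x o) := hg.monotoneOn hεI' (hxI o) hxo
  have hgj : ∀ j, j ≠ o → g (x j) ≤ g ε := fun j hj =>
    hg.monotoneOn (hxI j) hεI (by linarith [add_le_one_of_mem_stdSimplex hx hj])
  have hmax : ∀ j, g (x j) ≤ g (x o) := by
    intro j
    rcases eq_or_ne j o with rfl | hj
    · rfl
    have hcard : Fintype.card ι - 1 ≠ 0 := by
      have := Fintype.one_lt_card_iff.2 ⟨j, o, hj⟩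
      lia
    calc g (x j) ≤ g ε := hgj j hj
      _ ≤ g ε ^ (Fintype.card ι - 1) := le_self_pow₀ (hg.one_le hεI) hcard
      _ ≤ g (1 - εn) := hg.pow_le_apply_one_sub hε0.le hε1.le hεn1.le hgn
      _ ≤ g (1 - ε) := hg.monotoneOn hεnI' hεI' (by linarith)
      _ ≤ g (x o) := hgo
  have hR0 : 0 ≤ R := zero_le_one.trans (one_le_of_sum_le_mul hC hoo (hR o o hoo))
  have hmass : (1 - u o) * g (x o) ≤ ε * g (x o) :=
    calc (1 - u o) * g (x o)
        ≤ Fintype.card ι * R ^ Fintype.card ι * g ε ^ (Fintype.card ι - 1) :=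
          one_sub_mul_weight_le hC hoo hreach hR (hg.one_le hεI) (fun j => hg.one_le (hxI j)) hmax
            hgj hu hinv
      _ ≤ ε * g (1 - ε) :=
          hg.mul_pow_le_mul_apply_one_sub hε0 hε1 hεn1.le hgn hL (by positivity) hL'
      _ ≤ ε * g (x o) := mul_le_mul_of_nonneg_left hgo hε0.le
  linarith [le_of_mul_le_mul_right hmass (hg.pos (hxI o))]

theorem fixed_point_near_vertex_diagonal_entry_general (hC : ∀ i j, 0 ≤ C i j)
    (hreach : ∀ i, ∃ m : ℕ, 0 < (C ^ m) i o) (hoo : 0 < C o o) {εn : ℝ} (hε0 : 0 < ε)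
    (hε1 : ε < εn) (hεn1 : εn < 1) :
    ∃ δ : ℝ, 0 < δ ∧ ∀ g g' : ℝ → ℝ, ∀ L : ℝ, IsAdmissible g g' →
      g εn ^ (Fintype.card ι - 1) ≤ g (1 - εn) → IsLeast (ratioSet g g') L → δ ≤ L →
      ∀ u : (ι → ℝ) → ι → ℝ,
        (∀ x ∈ stdSimplex ℝ ι, IsUniqueInvariant (weightedKernel C (g ∘ x)) (u x)) →
        ∃ x ∈ stdSimplex ℝ ι, 1 - ε ≤ x o ∧ u x = x := by
  obtain ⟨R, hR⟩ := exists_forall_sum_le_mul C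
  have hR0 : 0 < R := one_pos.trans_le (one_le_of_sum_le_mul hC hoo (hR o o hoo))
  have hcard : 0 < Fintype.card ι := Fintype.card_pos_iff.2 ⟨o⟩
  refine ⟨Fintype.card ι * R ^ Fintype.card ι / (ε * (εn - ε)),
    div_pos (by positivity) (mul_pos hε0 (sub_pos.2 hε1)), fun g g' L hg hgn hL hδ u hu => ?_⟩
  have hgx : ContinuousOn (fun x : ι → ℝ => g ∘ x) (stdSimplex ℝ ι) :=
    continuousOn_pi.2 fun j => hg.continuousOn.comp (continuous_apply j).continuousOn
      fun x hx => mem_Icc_of_mem_stdSimplex hx j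
  have hcont : ContinuousOn u (stdSimplex ℝ ι) :=
    continuousOn_of_isUniqueInvariant ((continuousOn_weightedKernel hC
      (exists_pos_of_forall_pow_pos hC hoo hreach)).comp hgx
      fun x hx j => hg.pos (mem_Icc_of_mem_stdSimplex hx j)) hu
  let S : Set (ι → ℝ) := stdSimplex ℝ ι ∩ {x | 1 - ε ≤ x o}
  obtain ⟨x, hx, hfix⟩ := exists_isFixedPt_of_isCompact_of_convex (K := S) (f := u)
    ⟨Pi.single o 1, single_mem_stdSimplex ℝ o, by simpa using hε0.le⟩
    ((isCompact_stdSimplex ℝ ι).inter_right (isClosed_le continuous_const (continuous_apply o)))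
    ((convex_stdSimplex ℝ ι).inter (convex_halfSpace_ge (LinearMap.proj o).isLinear _))
    (hcont.mono inter_subset_left) fun x hx => ⟨(hu x hx.1).1,
      one_sub_le_of_vecMul_weightedKernel_eq hC hoo hreach hR hε0 hε1 hεn1 hg hgn hL.2 hδ hx.1 hx.2
        (hu x hx.1).1 (hu x hx.1).2.1⟩
  exact ⟨x, hx.1, hx.2, hfix⟩

end FixedPoint

/-- `C` is an irreducible `(n+1) × (n+1)` matrix with `C₁₁ > 0` and `εₙ ∈ (0,1)`.
For every `0 < ε < εₙ` and `L⁻(g)` large enough (depending only on `C`, `ε`, `εₙ`),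
if moreover `g(εₙ)^{(n+1)−1} ≤ g(1−εₙ)`, then `u_g` has a fixed point in
`Σ_ε = {x ∈ Σ : x₁ ≥ 1 − ε}`. -/
theorem fixed_point_near_vertex_diagonal_entry
    (n : ℕ) (C : Matrix (Fin (n+1)) (Fin (n+1)) ℝ)
    (hC0 : ∀ i j, 0 ≤ C i j) (hCirr : IsIrred C)
    (hC11 : 0 < C 0 0)
    (εn : ℝ) (hεn0 : 0 < εn) (hεn1 : εn < 1)
    (ε : ℝ) (hε0 : 0 < ε) (hε1 : ε < εn) :
    ∃ δ : ℝ, 0 < δ ∧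
      ∀ g g' : ℝ → ℝ, ∀ Lm : ℝ, IsAdmissible g g' →
        g εn ^ n ≤ g (1 - εn) →
        IsLeast (ratioSet g g') Lm → δ ≤ Lm →
        ∀ u : (Fin (n+1) → ℝ) → (Fin (n+1) → ℝ),
          (∀ x ∈ stdSimplex ℝ (Fin (n+1)), u x ∈ stdSimplex ℝ (Fin (n+1)) ∧
            Matrix.vecMul (u x) (Mg C g x) = u x ∧
            ∀ v ∈ stdSimplex ℝ (Fin (n+1)), Matrix.vecMul v (Mg C g x) = v → v = u x) →
          ∃ x ∈ stdSimplex ℝ (Fin (n+1)), 1 - ε ≤ x 0 ∧ u x = x := by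
  have h := fixed_point_near_vertex_diagonal_entry_general hC0
    (fun i => (hCirr i 0).imp fun _ hm => hm.2) hC11 hε0 hε1 hεn1
  rwa [Fintype.card_fin, Nat.add_sub_cancel] at h
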